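/- Let G be the n-path graph with n ≥ 3 and d = 3. For each i = 2, …, n−1, the ideals P_i and Q_i are prime ideals of S. -/

import Mathlib

open MvPolynomial

/-- The variable `y_{i c}` of the polynomial ring `K[y_{ij} : i ∈ [n], j ∈ [3]]`,
with indices `i ∈ {1, …, n}` and `c ∈ {1, 2, 3}` as in the paper
(and junk value `0` for out-of-range indices). -/
noncomputable def yvar (K : Type) [Field K] (n i c : ℕ) : MvPolynomial (Fin n × Fin 3) K :=
  if h : 1 ≤ i ∧ i ≤ n ∧ 1 ≤ c ∧ c ≤ 3 then
    MvPolynomial.X (⟨i - 1, by omega⟩, ⟨c - 1, by omega⟩)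
  else 0

/-- The LSS generator `f_{a(a+1)} = ∑_{k=1}^3 y_{ak} y_{(a+1)k}` associated to the edge
`{a, a+1}` of the `n`-path graph. -/
noncomputable def pathGen (K : Type) [Field K] (n a : ℕ) : MvPolynomial (Fin n × Fin 3) K :=
  ∑ k : Fin 3, yvar K n a (k.1 + 1) * yvar K n (a + 1) (k.1 + 1)

/-- The LSS ideal `L_G(3) = (f_{12}, …, f_{(n-1)n})` of the `n`-path graph `G`. -/
noncomputable def pathLSS (K : Type) [Field K] (n : ℕ) :
    Ideal (MvPolynomial (Fin n × Fin 3) K) :=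
  Ideal.span {g | ∃ a : ℕ, 1 ≤ a ∧ a + 1 ≤ n ∧ g = pathGen K n a}

/-- The ideal generated by the list `F_i` of all generators of `pathLSS` except
`f_{(i-1)i}` and `f_{i(i+1)}`. -/
noncomputable def exceptIdeal (K : Type) [Field K] (n i : ℕ) :
    Ideal (MvPolynomial (Fin n × Fin 3) K) :=
  Ideal.span {g | ∃ a : ℕ, 1 ≤ a ∧ a + 1 ≤ n ∧ a ≠ i - 1 ∧ a ≠ i ∧ g = pathGen K n a}

/-- The column index `k`: `2` if `i` is even, `3` if `i` is odd. -/
def kcol (i : ℕ) : ℕ := if Even i then 2 else 3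

/-- The column index `k̂ = 5 - k`: `3` if `i` is even, `2` if `i` is odd. -/
def khat (i : ℕ) : ℕ := if Even i then 3 else 2

/-- The ideal `P_i = (y_{i1}, y_{i2}, y_{i3}) + (F_i)` of `S`. -/
noncomputable def Pideal (K : Type) [Field K] (n i : ℕ) :
    Ideal (MvPolynomial (Fin n × Fin 3) K) :=
  Ideal.span {yvar K n i 1, yvar K n i 2, yvar K n i 3} ⊔ exceptIdeal K n i

/-- The ideal `Q_i = I_1(Y_i y_i) + (det Y_i, y_{i k̂}) + (F_i)` of `S`, where `Y_i` is
the `2 × 2` matrix with rows `(y_{(i-1)1}, y_{(i-1)k})`, `(y_{(i+1)1}, y_{(i+1)k})` and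
`y_i` is the column vector `(y_{i1}, y_{ik})`. -/
noncomputable def Qideal (K : Type) [Field K] (n i : ℕ) :
    Ideal (MvPolynomial (Fin n × Fin 3) K) :=
  Ideal.span
      {yvar K n (i - 1) 1 * yvar K n i 1 + yvar K n (i - 1) (kcol i) * yvar K n i (kcol i),
       yvar K n (i + 1) 1 * yvar K n i 1 + yvar K n (i + 1) (kcol i) * yvar K n i (kcol i),
       yvar K n (i - 1) 1 * yvar K n (i + 1) (kcol i) -
         yvar K n (i - 1) (kcol i) * yvar K n (i + 1) 1,
       yvar K n i (khat i)} ⊔ exceptIdeal K n i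

/-! Let `I` be a prime ideal not involving the variables `X_i`, and let `a` be a vector of
polynomials not involving them either. If `a_j, a_k` is a regular sequence modulo `I`, then adding
the equation `∑ a_i X_i = 0` keeps the ideal prime: after inverting `a_j` the equation eliminates
`X_j`, and regularity makes `a_j` a nonzerodivisor modulo the new ideal. The vector `X` is then
again of the same kind modulo the new ideal, so one can walk along a path, adding one edge at a
time.

For `P_i` the edges at `i` are removed, and the walk restarts with the fresh variables at `i + 1`.
For `Q_i` the walk reaches `i - 1`, and the remaining generators are the `2 × 2` minors of a `2 × 3`
matrix with first column `(y_{(i-1)1}, y_{(i-1)k})` and fresh variables elsewhere. They are handled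
by the same elimination, after which the walk continues from `i + 1`. The variables that are
generators themselves do not occur in the other generators. -/

section Elimination

variable {A σ : Type*} [CommRing A]

/-- The ideal whose equations express every variable `X i` with `i ∉ s` as the fraction
`g i / a`. -/
noncomputable def eliminationIdeal (a : A) (s : Set σ) (g : σ → MvPolynomial σ A) :
    Ideal (MvPolynomial σ A) :=
  Ideal.span ((fun i ↦ C a * X i - g i) '' sᶜ)

variable {a : A} {s : Set σ} {g : σ → MvPolynomial σ A}

theorem C_mul_X_sub_mem_eliminationIdeal {i : σ} (hi : i ∉ s) :
    C a * X i - g i ∈ eliminationIdeal a s g :=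
  Ideal.subset_span ⟨i, hi, rfl⟩

theorem exists_C_pow_mul_sub_mem_eliminationIdeal (hg : ∀ i ∉ s, g i ∈ supported A s)
    (f : MvPolynomial σ A) :
    ∃ N : ℕ, ∃ r ∈ supported A s, C a ^ N * f - r ∈ eliminationIdeal a s g := by
  have hC (c : A) : C c ∈ supported A s := (supported A s).algebraMap_mem c
  induction f using MvPolynomial.induction_on with
  | C c => exact ⟨0, C c, hC c, by simp⟩
  | add f₁ f₂ h₁ h₂ =>
    obtain ⟨N₁, r₁, hr₁, h₁⟩ := h₁
    obtain ⟨N₂, r₂, hr₂, h₂⟩ := h₂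
    refine ⟨N₁ + N₂, C a ^ N₂ * r₁ + C a ^ N₁ * r₂,
      add_mem (mul_mem (pow_mem (hC a) _) hr₁) (mul_mem (pow_mem (hC a) _) hr₂), ?_⟩
    convert Ideal.add_mem _ (Ideal.mul_mem_left _ (C a ^ N₂) h₁)
      (Ideal.mul_mem_left _ (C a ^ N₁) h₂) using 1
    ring
  | mul_X f i h =>
    obtain ⟨N, r, hr, h⟩ := h
    obtain ⟨x, hx, hi⟩ : ∃ x ∈ supported A s, C a * X i - x ∈ eliminationIdeal a s g := by
      by_cases hi : i ∈ s
      · exact ⟨C a * X i, mul_mem (hC a) (Algebra.subset_adjoin ⟨i, hi, rfl⟩), by simp⟩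
      · exact ⟨g i, hg i hi, C_mul_X_sub_mem_eliminationIdeal hi⟩
    refine ⟨N + 1, r * x, mul_mem hr hx, ?_⟩
    convert Ideal.add_mem _ (Ideal.mul_mem_left _ (C a * X i) h) (Ideal.mul_mem_left _ r hi) using 1
    ring

theorem eqOn_supported_of_forall_X {B : Type*} [CommRing B] [Algebra A B]
    [Algebra (MvPolynomial σ A) B] [IsScalarTower A (MvPolynomial σ A) B]
    {φ : MvPolynomial σ A →ₐ[A] B}
    (hφ : ∀ i ∈ s, φ (X i) = algebraMap (MvPolynomial σ A) B (X i)) :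
    Set.EqOn φ (algebraMap (MvPolynomial σ A) B) (supported A s) := by
  have key : Set.EqOn φ (IsScalarTower.toAlgHom A (MvPolynomial σ A) B) (supported A s) :=
    AlgHom.eqOn_adjoin_iff.mpr (by rintro _ ⟨i, hi, rfl⟩; exact hφ i hi)
  exact key

/-- Inverting `a` turns `I` into the elimination ideal, and the quotient into the domain
`A[1/a][X i | i ∈ s]`. -/
theorem isPrime_of_eliminationIdeal [IsDomain A] (ha : a ≠ 0) (hg : ∀ i ∉ s, g i ∈ supported A s)
    {I : Ideal (MvPolynomial σ A)} (hle : eliminationIdeal a s g ≤ I)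
    (hmul : Ideal.span {C a} * I ≤ eliminationIdeal a s g)
    (reg : IsSMulRegular (MvPolynomial σ A ⧸ I) (C a : MvPolynomial σ A)) : I.IsPrime := by
  classical
  let ψ := algebraMap (MvPolynomial σ A) (FractionRing (MvPolynomial σ A))
  have hψ : Function.Injective ψ := IsFractionRing.injective _ _
  have hψa : ψ (C a) ≠ 0 := (map_ne_zero_iff ψ hψ).mpr (by simpa using ha)
  let φ : MvPolynomial σ A →ₐ[A] FractionRing (MvPolynomial σ A) :=
    aeval fun i ↦ if i ∈ s then ψ (X i) else ψ (g i) / ψ (C a)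
  have hφψ : Set.EqOn φ ψ (supported A s) :=
    eqOn_supported_of_forall_X fun i hi ↦ by simp [φ, ψ, hi]
  have hφC : φ (C a) = ψ (C a) := hφψ ((supported A s).algebraMap_mem a)
  have hker : eliminationIdeal a s g ≤ RingHom.ker φ := by
    rw [eliminationIdeal, Ideal.span_le]
    rintro _ ⟨i, hi, rfl⟩
    have hφi : φ (X i) = ψ (g i) / ψ (C a) := by simp [φ, Set.notMem_of_mem_compl hi]
    rw [SetLike.mem_coe, RingHom.mem_ker, map_sub, map_mul, hφψ (hg i hi), hφi,
      hφC, mul_div_cancel₀ _ hψa, sub_self]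
  suffices I = RingHom.ker φ from this ▸ RingHom.ker_isPrime φ
  ext f
  obtain ⟨N, r, hr, hfr⟩ := exists_C_pow_mul_sub_mem_eliminationIdeal (a := a) hg f
  refine ⟨fun hf ↦ ?_, fun hf ↦ ?_⟩
  · have := hker (hmul (Ideal.mul_mem_mul (Ideal.mem_span_singleton_self _) hf))
    rw [RingHom.mem_ker, map_mul, hφC] at this
    exact (mul_eq_zero.mp this).resolve_left hψa
  · have hr₀ : r = 0 := by
      have := RingHom.mem_ker.mp (hker hfr)
      rw [map_sub, map_mul, RingHom.mem_ker.mp hf, mul_zero, zero_sub, neg_eq_zero, hφψ hr] at this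
      exact (map_eq_zero_iff ψ hψ).mp this
    rw [hr₀, sub_zero] at hfr
    exact mem_of_isSMulRegular_quotient_of_smul_mem (reg.pow N) (hle hfr)

theorem eliminationIdeal_one_zero (s : Set σ) :
    eliminationIdeal (1 : A) s 0 = Ideal.span (X '' sᶜ) := by
  simp [eliminationIdeal]

theorem isPrime_span_X_image [IsDomain A] (s : Set σ) :
    (Ideal.span (X '' s) : Ideal (MvPolynomial σ A)).IsPrime := by
  rw [← compl_compl s, ← eliminationIdeal_one_zero]
  exact isPrime_of_eliminationIdeal one_ne_zero (g := 0) (fun _ _ ↦ zero_mem _) le_rfl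
    (by simp) (by simp)

end Elimination

section Regular

theorem isSMulRegular_quotient_span_swap {R : Type*} [CommRing R] [IsDomain R] {a b : R}
    (ha : a ≠ 0) (h : IsSMulRegular (R ⧸ Ideal.span {a}) b) :
    IsSMulRegular (R ⧸ Ideal.span {b}) a := by
  refine (isSMulRegular_quotient_iff_mem_of_smul_mem _ _).mpr fun x hx ↦ ?_
  obtain ⟨y, hy⟩ := Ideal.mem_span_singleton.mp hx
  have hya : y ∈ Ideal.span {a} := mem_of_isSMulRegular_quotient_of_smul_mem h
    (Ideal.mem_span_singleton.mpr ⟨x, hy.symm⟩)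
  obtain ⟨z, rfl⟩ := Ideal.mem_span_singleton.mp hya
  exact Ideal.mem_span_singleton.mpr ⟨z, mul_left_cancel₀ ha (by linear_combination hy)⟩

variable {A σ : Type*} [CommRing A]

theorem isSMulRegular_monomial_add {J : Ideal A} {c : A} {m₀ : σ →₀ ℕ} {k : σ}
    {r : MvPolynomial σ A} (hc : IsSMulRegular (A ⧸ J) c) (hr : ∀ m ∈ r.support, m k < m₀ k) :
    IsSMulRegular (MvPolynomial σ A ⧸ J.map C) (monomial m₀ c + r) := by
  classical
  refine (isSMulRegular_quotient_iff_mem_of_smul_mem _ _).mpr fun g hg ↦ ?_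
  by_contra hgJ
  let T := {m ∈ g.support | coeff m g ∉ J}
  have hTne : T.Nonempty := by
    rw [mem_map_C_iff] at hgJ
    push Not at hgJ
    obtain ⟨m, hm⟩ := hgJ
    exact ⟨m, Finset.mem_filter.mpr ⟨mem_support_iff.mpr fun h ↦ hm (h ▸ J.zero_mem), hm⟩⟩
  obtain ⟨m₁, hm₁, hmax⟩ := T.exists_max_image (fun m ↦ m k) hTne
  have hrest : coeff (m₀ + m₁) (r * g) ∈ J := by
    rw [coeff_mul]
    refine J.sum_mem fun p hp ↦ ?_
    by_cases h₁ : p.1 ∈ r.support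
    · have hlt := hr _ h₁
      have hsum : p.1 k + p.2 k = m₀ k + m₁ k :=
        DFunLike.congr_fun (Finset.HasAntidiagonal.mem_antidiagonal.mp hp) k
      refine J.mul_mem_left _ (by_contra fun h₂ ↦ ?_)
      have := hmax p.2 (Finset.mem_filter.mpr
        ⟨mem_support_iff.mpr fun h ↦ h₂ (h ▸ J.zero_mem), h₂⟩)
      omega
    · simp [notMem_support_iff.mp h₁]
  have hprod := mem_map_C_iff.mp hg (m₀ + m₁)
  rw [smul_eq_mul, add_mul, coeff_add, coeff_monomial_mul] at hprod
  exact (Finset.mem_filter.mp hm₁).2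
    (mem_of_isSMulRegular_quotient_of_smul_mem hc ((J.add_mem_iff_left hrest).mp hprod))

theorem isSMulRegular_C {J : Ideal A} {c : A} (hc : IsSMulRegular (A ⧸ J) c) :
    IsSMulRegular (MvPolynomial σ A ⧸ J.map C) (C c : MvPolynomial σ A) := by
  refine (isSMulRegular_quotient_iff_mem_of_smul_mem _ _).mpr fun g hg ↦ ?_
  rw [mem_map_C_iff] at hg ⊢
  exact fun m ↦ mem_of_isSMulRegular_quotient_of_smul_mem hc (by simpa using hg m)

theorem isSMulRegular_X (J : Ideal A) (k : σ) :
    IsSMulRegular (MvPolynomial σ A ⧸ J.map C) (X k : MvPolynomial σ A) := by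
  simpa [X] using isSMulRegular_monomial_add (J := J) (m₀ := Finsupp.single k 1) (k := k) (r := 0)
    (by simp : IsSMulRegular (A ⧸ J) (1 : A))

theorem isSMulRegular_X_sup_span_X (J : Ideal A) {j k : σ} (hkj : k ≠ j) :
    IsSMulRegular (MvPolynomial σ A ⧸ J.map C ⊔ Ideal.span {X j}) (X k : MvPolynomial σ A) := by
  classical
  let I : Ideal (MvPolynomial σ A) := J.map C ⊔ Ideal.span {X j}
  refine (isSMulRegular_quotient_iff_mem_of_smul_mem _ _).mpr fun f hf ↦ ?_
  obtain ⟨N, g, hg, hfg⟩ :=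
    exists_C_pow_mul_sub_mem_eliminationIdeal (a := 1) (s := {j}ᶜ) (g := 0) (fun _ _ ↦ zero_mem _) f
  rw [eliminationIdeal_one_zero, compl_compl, Set.image_singleton, map_one, one_pow, one_mul]
    at hfg
  replace hfg : f - g ∈ I := Ideal.mem_sup_right hfg
  let φ : MvPolynomial σ A →ₐ[A] MvPolynomial σ A := aeval (Function.update X j 0)
  have hφg : φ g = g := eqOn_supported_of_forall_X (B := MvPolynomial σ A) (s := {j}ᶜ)
    (fun i hi ↦ by simp [φ, show i ≠ j by simpa using hi]) hg
  have hIφ : I.map φ ≤ J.map C := by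
    refine Ideal.map_le_iff_le_comap.mpr (sup_le (Ideal.map_le_iff_le_comap.mpr fun c hc ↦ ?_) ?_)
    · simpa using Ideal.mem_map_of_mem C hc
    · simp [φ]
  have hXg : X k * g ∈ I := by
    convert I.sub_mem hf (I.mul_mem_left (X k) hfg) using 1
    rw [smul_eq_mul]
    ring
  have hgJ : g ∈ J.map C := by
    refine mem_of_isSMulRegular_quotient_of_smul_mem (isSMulRegular_X J k) ?_
    have hφX : φ (X k) = X k := by simp [φ, hkj]
    simpa only [map_mul, hφX, hφg, smul_eq_mul] using hIφ (Ideal.mem_map_of_mem φ hXg)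
  simpa using I.add_mem hfg (Ideal.mem_sup_left hgJ)

end Regular

section LinearForm

variable {A ι : Type*} [CommRing A] [Fintype ι]

/-- The linear form `∑ i, a i • X i`. -/
noncomputable def linearForm (a : ι → A) : MvPolynomial ι A :=
  ∑ i, C (a i) * X i

@[simp]
theorem eval_linearForm (a x : ι → A) : eval x (linearForm a) = ∑ i, a i * x i := by
  simp [linearForm]

theorem linearForm_eq_add_sum [DecidableEq ι] (a : ι → A) (j : ι) :
    linearForm a = C (a j) * X j + ∑ i ∈ {j}ᶜ, C (a i) * X i :=
  Fintype.sum_eq_add_sum_compl j _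

theorem isSMulRegular_linearForm {J : Ideal A} {a : ι → A} {k : ι}
    (hk : IsSMulRegular (A ⧸ J) (a k)) :
    IsSMulRegular (MvPolynomial ι A ⧸ J.map C) (linearForm a) := by
  classical
  rw [linearForm_eq_add_sum a k, C_mul_X_eq_monomial]
  refine isSMulRegular_monomial_add (k := k) hk fun m hm ↦ ?_
  obtain ⟨i, hi, hm⟩ := Finset.mem_biUnion.mp (support_sum hm)
  have hmi : m = Finsupp.single i 1 := by
    rw [C_mul_X_eq_monomial] at hm
    simpa using support_monomial_subset hm
  have hik : i ≠ k := by simpa using hi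
  simp [hmi, hik]

variable {a : ι → A} {j k : ι}

theorem X_notMem_span_linearForm (hkj : k ≠ j) (hk : a k ≠ 0) :
    X j ∉ Ideal.span {linearForm a} := by
  classical
  intro h
  have hmem := Ideal.mem_map_of_mem (eval (Pi.single j (a k) - Pi.single k (a j) : ι → A)) h
  simp [Ideal.map_span, mul_sub, Finset.sum_sub_distrib, Pi.single_apply, hkj.symm, hk,
    mul_comm] at hmem

variable [IsDomain A]

theorem isPrime_span_linearForm (hj : a j ≠ 0)
    (hk : IsSMulRegular (A ⧸ Ideal.span {a j}) (a k)) :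
    (Ideal.span {linearForm a}).IsPrime := by
  classical
  let r : MvPolynomial ι A := ∑ i ∈ {j}ᶜ, C (a i) * X i
  have hℓ : linearForm a = C (a j) * X j + r := linearForm_eq_add_sum a j
  have hrs : r ∈ supported A {j}ᶜ := sum_mem fun i hi ↦
    mul_mem ((supported A _).algebraMap_mem _) (X_mem_supported.mpr (by simpa using hi))
  have hspan : eliminationIdeal (a j) {j}ᶜ (fun _ ↦ -r) = Ideal.span {linearForm a} := by
    simp [eliminationIdeal, hℓ]
  refine isPrime_of_eliminationIdeal hj (fun _ _ ↦ neg_mem hrs) hspan.le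
    (Ideal.mul_le_right.trans hspan.ge) (isSMulRegular_quotient_span_swap (by simpa using hj) ?_)
  have := isSMulRegular_linearForm hk
  rwa [Ideal.map_span, Set.image_singleton] at this

theorem isSMulRegular_X_linearForm {t : ι} (hkj : k ≠ j) (htj : t ≠ j) (htk : t ≠ k)
    (ht : a t ≠ 0) :
    IsSMulRegular (MvPolynomial ι A ⧸ Ideal.span {linearForm a} ⊔ Ideal.span {X j})
      (X k : MvPolynomial ι A) := by
  classical
  refine (isSMulRegular_quotient_iff_mem_of_smul_mem _ _).mpr fun g hg ↦ ?_
  rw [← Ideal.span_insert, Ideal.mem_span_pair] at hg ⊢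
  obtain ⟨m, h, hmh⟩ := hg
  have hm : m ∈ Ideal.span {X j, X k} := by
    have hprime : (Ideal.span {X j, X k} : Ideal (MvPolynomial ι A)).IsPrime := by
      simpa [Set.image_pair] using isPrime_span_X_image (A := A) {j, k}
    have hmul : m * linearForm a ∈ Ideal.span {X j, X k} := Ideal.mem_span_pair.mpr ⟨-h, g, by
      rw [smul_eq_mul] at hmh
      linear_combination -hmh⟩
    refine (hprime.mem_or_mem hmul).resolve_right fun hℓ ↦ ht ?_
    have hmem := Ideal.mem_map_of_mem (eval (Pi.single t (1 : A))) hℓ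
    simpa [Ideal.map_span, Set.image_pair, Pi.single_apply, htj.symm, htk.symm] using hmem
  obtain ⟨u, w, rfl⟩ := Ideal.mem_span_pair.mp hm
  obtain ⟨v, hv⟩ : X j ∣ g - linearForm a * w := by
    refine ((X_prime (i := j)).dvd_or_dvd (a := X k) ⟨linearForm a * u + h, ?_⟩).resolve_left ?_
    · rw [smul_eq_mul] at hmh
      linear_combination -hmh
    · simpa [X_dvd_X] using hkj.symm
  exact ⟨w, v, by linear_combination -hv⟩

end LinearForm

section Minors

variable {A : Type*} [CommRing A]

theorem isSMulRegular_hyperbolic (J : Ideal A) :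
    IsSMulRegular (MvPolynomial (Fin 4) A ⧸ J.map C)
      (X 0 * X 2 + X 1 * X 3 : MvPolynomial (Fin 4) A) := by
  rw [X, X, X, X, monomial_mul, monomial_mul]
  refine isSMulRegular_monomial_add (k := 0) (by simp) fun m hm ↦ ?_
  rw [Finset.mem_singleton.mp (support_monomial_subset hm)]
  simp

/-- The ideal of `2 × 2` minors of the matrix with rows `(a, p, -w)` and `(b, q, v)`. -/
def minorsIdeal {R : Type*} [CommRing R] (a b p q v w : R) : Ideal R :=
  Ideal.span {a * v + b * w, p * v + q * w, a * q - b * p}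

theorem map_minorsIdeal {R T : Type*} [CommRing R] [CommRing T] (φ : R →+* T) (a b p q v w : R) :
    (minorsIdeal a b p q v w).map φ = minorsIdeal (φ a) (φ b) (φ p) (φ q) (φ v) (φ w) := by
  simp [minorsIdeal, Ideal.map_span, Set.image_insert_eq]

variable {a b : A}

theorem map_eval_minorsIdeal :
    (minorsIdeal (C a) (C b) (X 0) (X 1) (X 2) (X 3) : Ideal (MvPolynomial (Fin 4) A)).map
      (eval ![a, b, 0, 0]) = ⊥ := by
  rw [map_minorsIdeal]
  simp [minorsIdeal, mul_comm b]

theorem X_zero_notMem_minorsIdeal (ha : a ≠ 0) :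
    (X 0 : MvPolynomial (Fin 4) A) ∉ minorsIdeal (C a) (C b) (X 0) (X 1) (X 2) (X 3) :=
  fun h ↦ ha <| by simpa [map_eval_minorsIdeal] using Ideal.mem_map_of_mem (eval ![a, b, 0, 0]) h

theorem X_one_notMem_minorsIdeal (hb : b ≠ 0) :
    (X 1 : MvPolynomial (Fin 4) A) ∉ minorsIdeal (C a) (C b) (X 0) (X 1) (X 2) (X 3) :=
  fun h ↦ hb <| by simpa [map_eval_minorsIdeal] using Ideal.mem_map_of_mem (eval ![a, b, 0, 0]) h

theorem C_dvd_of_C_dvd_mul {σ : Type*} {f g : MvPolynomial σ A}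
    (hf : IsSMulRegular (MvPolynomial σ A ⧸ (Ideal.span {a}).map C) f) (h : C a ∣ f * g) :
    C a ∣ g := by
  rw [Ideal.map_span, Set.image_singleton] at hf
  rw [← Ideal.mem_span_singleton] at h ⊢
  exact mem_of_isSMulRegular_quotient_of_smul_mem hf h

/-- Of the three generators, the second one is free of `C a` and regular modulo `(a, b)`, so its
coefficient in a multiple of `C a` lies in `(a, b)`. The remaining coefficients are then compared
modulo `a`. -/
theorem isSMulRegular_C_minorsIdeal [IsDomain A] (ha : a ≠ 0)
    (hb : IsSMulRegular (A ⧸ Ideal.span {a}) b) :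
    IsSMulRegular (MvPolynomial (Fin 4) A ⧸ minorsIdeal (C a) (C b) (X 0) (X 1) (X 2) (X 3))
      (C a : MvPolynomial (Fin 4) A) := by
  have hCa : (C a : MvPolynomial (Fin 4) A) ≠ 0 := by simpa using ha
  have hmap : (Ideal.span {a}).map C = Ideal.span {(C a : MvPolynomial (Fin 4) A)} := by
    rw [Ideal.map_span, Set.image_singleton]
  refine (isSMulRegular_quotient_iff_mem_of_smul_mem _ _).mpr fun g hg ↦ ?_
  obtain ⟨h, k, m, hg⟩ := Submodule.mem_span_triple.mp hg
  simp only [smul_eq_mul] at hg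
  obtain ⟨k₁, k₂, rfl⟩ : ∃ k₁ k₂, k₁ * C a + k₂ * C b = k := by
    rw [← Ideal.mem_span_pair, ← Set.image_pair, ← Ideal.map_span]
    refine mem_of_isSMulRegular_quotient_of_smul_mem (isSMulRegular_hyperbolic _) ?_
    rw [Ideal.map_span, Set.image_pair, Ideal.mem_span_pair]
    exact ⟨g - h * X 2 - m * X 1, m * X 0 - h * X 3, by rw [smul_eq_mul]; linear_combination -hg⟩
  obtain ⟨c, hc⟩ : C a ∣ X 3 * h + (X 0 * X 2 + X 1 * X 3) * k₂ - X 0 * m :=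
    C_dvd_of_C_dvd_mul (isSMulRegular_C hb)
      ⟨g - X 2 * h - (X 0 * X 2 + X 1 * X 3) * k₁ - X 1 * m, by linear_combination hg⟩
  obtain ⟨s, e, hm⟩ : ∃ s e, s * C a + e * X 3 = m - X 2 * k₂ := by
    rw [← Ideal.mem_span_pair, Ideal.span_insert, ← hmap]
    refine mem_of_isSMulRegular_quotient_of_smul_mem
      (isSMulRegular_X_sup_span_X _ (k := 0) (by decide)) ?_
    rw [hmap, ← Ideal.span_insert, Ideal.mem_span_pair]
    exact ⟨-c, h + X 1 * k₂, by rw [smul_eq_mul]; linear_combination hc⟩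
  obtain ⟨t, ht⟩ : C a ∣ h + X 1 * k₂ - X 0 * e :=
    C_dvd_of_C_dvd_mul (isSMulRegular_X _ 3)
      ⟨c + X 0 * s, by linear_combination hc - X 0 * hm⟩
  obtain rfl : g = t * (C a * X 2 + C b * X 3) + (e + k₁) * (X 0 * X 2 + X 1 * X 3) +
      s * (C a * X 1 - C b * X 0) := mul_left_cancel₀ hCa <| by
    linear_combination (C a * X 2 + C b * X 3) * ht - (C a * X 1 - C b * X 0) * hm - hg
  exact Submodule.mem_span_triple.mpr ⟨t, e + k₁, s, by simp only [smul_eq_mul]⟩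

theorem isPrime_minorsIdeal [IsDomain A] (ha : a ≠ 0)
    (hb : IsSMulRegular (A ⧸ Ideal.span {a}) b) :
    (minorsIdeal (C a) (C b) (X 0) (X 1) (X 2) (X 3) :
      Ideal (MvPolynomial (Fin 4) A)).IsPrime := by
  have hmem (i : Fin 4) (hi : i = 0 ∨ i = 3) : C b * X i ∈ supported A {0, 3} :=
    mul_mem ((supported A _).algebraMap_mem _) (Algebra.subset_adjoin ⟨i, hi, rfl⟩)
  have hcompl : ({0, 3} : Set (Fin 4))ᶜ = {1, 2} := by
    ext i
    fin_cases i <;> simp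
  let g : Fin 4 → MvPolynomial (Fin 4) A := ![0, C b * X 0, -(C b * X 3), 0]
  have helim : eliminationIdeal a {0, 3} g =
      Ideal.span {C a * X 1 - C b * X 0, C a * X 2 + C b * X 3} := by
    simp [eliminationIdeal, hcompl, Set.image_pair, g]
  refine isPrime_of_eliminationIdeal (s := {0, 3}) (g := g) ha (fun i hi ↦ ?_) ?_ ?_
    (isSMulRegular_C_minorsIdeal ha hb)
  · obtain rfl | rfl : i = 1 ∨ i = 2 := by simpa using hcompl.le hi
    · exact hmem 0 (.inl rfl)
    · exact neg_mem (hmem 3 (.inr rfl))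
  · rw [helim]
    exact Ideal.span_mono (by simp [Set.insert_subset_iff])
  · rw [helim, minorsIdeal, Ideal.span_mul_span', Ideal.span_le]
    rintro _ ⟨_, rfl, _, rfl | rfl | rfl, rfl⟩
    · exact Ideal.mul_mem_left _ _ (Ideal.subset_span (by simp))
    · exact Ideal.mem_span_pair.mpr ⟨X 3, X 0, by ring⟩
    · exact Ideal.mul_mem_left _ _ (Ideal.subset_span (by simp))

end Minors

section Transfer

variable {R T : Type*} [CommRing R] [CommRing T] {π : R →+* T}

theorem mem_ker_sup_iff (hπ : Function.Surjective π) {J : Ideal R} {f : R} :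
    f ∈ RingHom.ker π ⊔ J ↔ π f ∈ J.map π := by
  rw [sup_comm, ← Ideal.comap_map_of_surjective' π hπ, Ideal.mem_comap]

theorem isPrime_ker_sup (hπ : Function.Surjective π) {J : Ideal R} (hJ : (J.map π).IsPrime) :
    (RingHom.ker π ⊔ J).IsPrime := by
  rw [sup_comm, ← Ideal.comap_map_of_surjective' π hπ]
  exact Ideal.comap_isPrime π _

theorem isSMulRegular_quotient_ker_sup_iff (hπ : Function.Surjective π) {J : Ideal R} {f : R} :
    IsSMulRegular (R ⧸ RingHom.ker π ⊔ J) f ↔ IsSMulRegular (T ⧸ J.map π) (π f) := by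
  simp [isSMulRegular_quotient_iff_mem_of_smul_mem, mem_ker_sup_iff hπ, hπ.forall]

theorem isSMulRegular_quotient_span_of_C {A σ : Type*} [CommRing A] {a b : A}
    (h : IsSMulRegular (MvPolynomial σ A ⧸ Ideal.span {C a}) (C b : MvPolynomial σ A)) :
    IsSMulRegular (A ⧸ Ideal.span {a}) b := by
  simp only [isSMulRegular_quotient_iff_mem_of_smul_mem, Ideal.mem_span_singleton, smul_eq_mul]
    at h ⊢
  intro x hx
  have hCx : C a ∣ (C x : MvPolynomial σ A) := h (C x) (by simpa using map_dvd C hx)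
  simpa using map_dvd constantCoeff hCx

end Transfer

section Supported

universe uK uV

variable {K : Type uK} {V : Type uV} [CommRing K]

/-- The ideal `I` can be generated by polynomials in the variables from `s` alone. -/
def SupportedOn (s : Set V) (I : Ideal (MvPolynomial V K)) : Prop :=
  ∃ F : Set (MvPolynomial V K), F ⊆ supported K s ∧ I = Ideal.span F

variable {s t : Set V} {I J : Ideal (MvPolynomial V K)}

theorem supportedOn_bot : SupportedOn s (⊥ : Ideal (MvPolynomial V K)) :=
  ⟨∅, Set.empty_subset _, Ideal.span_empty.symm⟩

theorem supportedOn_span {F : Set (MvPolynomial V K)} (hF : F ⊆ supported K s) :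
    SupportedOn s (Ideal.span F) :=
  ⟨F, hF, rfl⟩

theorem SupportedOn.mono (hI : SupportedOn s I) (hst : s ⊆ t) : SupportedOn t I := by
  obtain ⟨F, hF, rfl⟩ := hI
  exact supportedOn_span (hF.trans (supported_mono hst))

theorem SupportedOn.sup (hI : SupportedOn s I) (hJ : SupportedOn s J) :
    SupportedOn s (I ⊔ J) := by
  obtain ⟨F, hF, rfl⟩ := hI
  obtain ⟨G, hG, rfl⟩ := hJ
  rw [← Ideal.span_union]
  exact supportedOn_span (Set.union_subset hF hG)

theorem exists_separating_algEquiv {ι : Type*} {u : ι → V} (hu : Function.Injective u) :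
    ∃ σ : MvPolynomial V K ≃ₐ[K] MvPolynomial ι (MvPolynomial ↥(Set.range u)ᶜ K),
      (∀ i, σ (X (u i)) = X i) ∧ ∀ f, σ (rename (↑) f) = C f := by
  classical
  let e : ι ⊕ ↥(Set.range u)ᶜ ≃ V :=
    (Equiv.sumCongr (Equiv.ofInjective u hu) (Equiv.refl _)).trans (Equiv.Set.sumCompl _)
  have hinl (i : ι) : e.symm (u i) = Sum.inl i := e.symm_apply_eq.mpr rfl
  have hinr : e.symm ∘ (↑) = (Sum.inr : ↥(Set.range u)ᶜ → ι ⊕ ↥(Set.range u)ᶜ) :=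
    funext fun w ↦ e.symm_apply_eq.mpr rfl
  refine ⟨(renameEquiv K e.symm).trans (sumAlgEquiv K ι _), fun i ↦ ?_, fun f ↦ ?_⟩
  · simp [hinl]
  · have := DFunLike.congr_fun (sumAlgEquiv_comp_rename_inr K ι ↥(Set.range u)ᶜ) f
    simpa [rename_rename, hinr] using this

theorem SupportedOn.exists_surjective {ι : Type*} {u : ι → V} (hu : Function.Injective u)
    (hI : SupportedOn (Set.range u)ᶜ I) [I.IsPrime] :
    ∃ (A : Type (max uK uV)) (_ : CommRing A) (_ : IsDomain A)
      (π : MvPolynomial V K →+* MvPolynomial ι A),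
      Function.Surjective π ∧ RingHom.ker π = I ∧ (∀ i, π (X (u i)) = X i) ∧
        ∀ f ∈ supported K (Set.range u)ᶜ, ∃ a, π f = C a := by
  obtain ⟨σ, hσX, hσ⟩ := exists_separating_algEquiv (K := K) hu
  let I₀ := I.comap (rename (↑) : MvPolynomial ↥(Set.range u)ᶜ K →ₐ[K] MvPolynomial V K)
  let ρ : MvPolynomial ι (MvPolynomial ↥(Set.range u)ᶜ K) →+* MvPolynomial ι (_ ⧸ I₀) :=
    map (Ideal.Quotient.mk I₀)
  have hρ : RingHom.ker ρ = I₀.map C := by rw [ker_map, Ideal.mk_ker]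
  have hle : I₀.map C ≤ I.comap σ.symm := Ideal.map_le_iff_le_comap.mpr fun g hg ↦ by
    simpa [← hσ] using Ideal.mem_comap.mp hg
  refine ⟨_, inferInstance, inferInstance, ρ.comp σ,
    (map_surjective _ Ideal.Quotient.mk_surjective).comp σ.surjective,
    le_antisymm (fun f hf ↦ ?_) ?_, by simp [ρ, hσX], fun f hf ↦ ?_⟩
  · simpa using hle (hρ.le hf)
  · obtain ⟨F, hF, rfl⟩ := hI
    refine Ideal.span_le.mpr fun f hf ↦ ?_
    obtain ⟨g, rfl⟩ := (supported_eq_range_rename (R := K) (Set.range u)ᶜ).le (hF hf)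
    have hg : g ∈ I₀ := Ideal.subset_span hf
    have : C g ∈ RingHom.ker ρ := hρ.ge (Ideal.mem_map_of_mem C hg)
    simpa [hσ] using this
  · obtain ⟨g, rfl⟩ := (supported_eq_range_rename (R := K) (Set.range u)ᶜ).le hf
    exact ⟨Ideal.Quotient.mk I₀ g, by simp [ρ, hσ]⟩

end Supported

section Extension

theorem isSMulRegular_quotient_of_notMem {R : Type*} [CommRing R] {P : Ideal R} (hP : P.IsPrime)
    {f : R} (hf : f ∉ P) : IsSMulRegular (R ⧸ P) f :=
  (isSMulRegular_quotient_iff_mem_of_smul_mem _ _).mpr fun _ hx ↦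
    (hP.mem_or_mem hx).resolve_left hf

variable {K V ι : Type*} [CommRing K] {I : Ideal (MvPolynomial V K)}

theorem SupportedOn.X_notMem [I.IsPrime] {s : Set V} (hI : SupportedOn sᶜ I) {v : V} (hv : v ∈ s) :
    X v ∉ I := by
  rw [← Subtype.range_coe (s := s)] at hI
  obtain ⟨A, _, _, π, -, rfl, hX, -⟩ := hI.exists_surjective Subtype.val_injective
  simpa using (hX ⟨v, hv⟩).trans_ne (X_ne_zero _)

theorem SupportedOn.isPrime_sup_span_X_image [I.IsPrime] {s : Set V} (hI : SupportedOn sᶜ I) :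
    (I ⊔ Ideal.span (X '' s)).IsPrime := by
  rw [← Subtype.range_coe (s := s)] at hI
  obtain ⟨A, _, _, π, hπ, rfl, hX, -⟩ := hI.exists_surjective Subtype.val_injective
  refine isPrime_ker_sup hπ ?_
  have himage : π '' (X '' s) = X '' Set.univ := by
    rw [Set.image_image, Set.image_univ, Set.image_eq_range, funext hX]
  rw [Ideal.map_span, himage]
  exact isPrime_span_X_image _

theorem SupportedOn.notMem_sup_span_X_image [I.IsPrime] {s : Set V} (hI : SupportedOn sᶜ I)
    {f : MvPolynomial V K} (hf : f ∈ supported K sᶜ) (hfI : f ∉ I) :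
    f ∉ I ⊔ Ideal.span (X '' s) := by
  rw [← Subtype.range_coe (s := s)] at hI hf
  obtain ⟨A, _, _, π, -, rfl, hX, hC⟩ := hI.exists_surjective Subtype.val_injective
  obtain ⟨a, ha⟩ := hC f hf
  have hle : Ideal.span (X '' s) ≤ RingHom.ker ((eval 0).comp π) := by
    rw [Ideal.span_le]
    rintro _ ⟨v, hv, rfl⟩
    simpa using congrArg (eval 0) (hX ⟨v, hv⟩)
  intro h
  have : f ∈ RingHom.ker ((eval 0).comp π) := sup_le (fun x hx ↦ by simp_all) hle h
  simp_all

theorem SupportedOn.isSMulRegular_sup_span_X [I.IsPrime] {v : V} (hI : SupportedOn {v}ᶜ I)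
    {f : MvPolynomial V K} (hf : f ∈ supported K {v}ᶜ) (hfI : f ∉ I) :
    IsSMulRegular (MvPolynomial V K ⧸ I ⊔ Ideal.span {X v}) f := by
  rw [← Set.image_singleton (f := X)]
  exact isSMulRegular_quotient_of_notMem hI.isPrime_sup_span_X_image
    (hI.notMem_sup_span_X_image hf hfI)

/-- Vectors `a` for which adding the linear equation `∑ i, a i * X i = 0` in fresh variables `X i`
to the ideal `I` keeps the ideal prime: modulo the prime ideal `I` all entries are nonzero, and
`a j, a k` is a regular sequence. -/
structure IsGenericMod {R : Type*} [CommRing R] (I : Ideal R) (a : ι → R) (j k : ι) : Prop where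
  isPrime : I.IsPrime
  notMem : ∀ i, a i ∉ I
  isSMulRegular : IsSMulRegular (R ⧸ I ⊔ Ideal.span {a j}) (a k)

variable {u : ι → V} {j k : ι}

theorem SupportedOn.isGenericMod_X [I.IsPrime] (hI : SupportedOn (Set.range u)ᶜ I)
    (hjk : u k ≠ u j) : IsGenericMod I (fun i ↦ X (u i)) j k where
  isPrime := ‹_›
  notMem i := hI.X_notMem ⟨i, rfl⟩
  isSMulRegular := (hI.mono (by simp)).isSMulRegular_sup_span_X
    (Algebra.subset_adjoin ⟨u k, hjk, rfl⟩) (hI.X_notMem ⟨k, rfl⟩)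

theorem IsGenericMod.sup_span_sum [Fintype ι] (hu : Function.Injective u)
    (hI : SupportedOn (Set.range u)ᶜ I) {a : ι → MvPolynomial V K}
    (ha : ∀ i, a i ∈ supported K (Set.range u)ᶜ) (h : IsGenericMod I a j k) {t : ι}
    (hkj : k ≠ j) (htj : t ≠ j) (htk : t ≠ k) :
    IsGenericMod (I ⊔ Ideal.span {∑ i, a i * X (u i)}) (fun i ↦ X (u i)) j k := by
  have := h.isPrime
  obtain ⟨A, _, _, π, hπ, rfl, hX, hC⟩ := hI.exists_surjective hu
  choose c hc using fun i ↦ hC (a i) (ha i)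
  have hc₀ (i : ι) : c i ≠ 0 := by simpa [hc] using h.notMem i
  have hmap : (Ideal.span {∑ i, a i * X (u i)}).map π = Ideal.span {linearForm c} := by
    simp [Ideal.map_span, linearForm, hX, hc]
  refine ⟨isPrime_ker_sup hπ ?_, fun i ↦ ?_, ?_⟩
  · have := h.isSMulRegular
    rw [isSMulRegular_quotient_ker_sup_iff hπ, Ideal.map_span, Set.image_singleton, hc, hc] at this
    rw [hmap]
    exact isPrime_span_linearForm (hc₀ j) (isSMulRegular_quotient_span_of_C this)
  · obtain ⟨l, hl⟩ : ∃ l, l ≠ i := by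
      by_contra! hall
      exact hkj ((hall k).trans (hall j).symm)
    rw [mem_ker_sup_iff hπ, hmap, hX]
    exact X_notMem_span_linearForm hl (hc₀ l)
  · rw [sup_assoc, isSMulRegular_quotient_ker_sup_iff hπ, Ideal.map_sup, hmap, Ideal.map_span,
      Set.image_singleton, hX, hX]
    exact isSMulRegular_X_linearForm hkj htj htk (hc₀ t)

theorem supportedOn_minorsIdeal {s : Set V} {a b p q v w : MvPolynomial V K}
    (ha : a ∈ supported K s) (hb : b ∈ supported K s) (hp : p ∈ supported K s)
    (hq : q ∈ supported K s) (hv : v ∈ supported K s) (hw : w ∈ supported K s) :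
    SupportedOn s (minorsIdeal a b p q v w) := by
  refine supportedOn_span ?_
  rintro _ (rfl | rfl | rfl)
  · exact add_mem (mul_mem ha hv) (mul_mem hb hw)
  · exact add_mem (mul_mem hp hv) (mul_mem hq hw)
  · exact sub_mem (mul_mem ha hq) (mul_mem hb hp)

theorem IsGenericMod.isPrime_sup_minorsIdeal {u : Fin 4 → V} (hu : Function.Injective u)
    (hI : SupportedOn (Set.range u)ᶜ I) {a : ι → MvPolynomial V K}
    (ha : ∀ i, a i ∈ supported K (Set.range u)ᶜ) (h : IsGenericMod I a j k) :
    (I ⊔ minorsIdeal (a j) (a k) (X (u 0)) (X (u 1)) (X (u 2)) (X (u 3))).IsPrime ∧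
      X (u 0) ∉ I ⊔ minorsIdeal (a j) (a k) (X (u 0)) (X (u 1)) (X (u 2)) (X (u 3)) ∧
      X (u 1) ∉ I ⊔ minorsIdeal (a j) (a k) (X (u 0)) (X (u 1)) (X (u 2)) (X (u 3)) := by
  have := h.isPrime
  obtain ⟨A, _, _, π, hπ, rfl, hX, hC⟩ := hI.exists_surjective hu
  choose c hc using fun i ↦ hC (a i) (ha i)
  have hc₀ (i : ι) : c i ≠ 0 := by simpa [hc] using h.notMem i
  have hreg : IsSMulRegular (A ⧸ Ideal.span {c j}) (c k) := by
    have := h.isSMulRegular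
    rw [isSMulRegular_quotient_ker_sup_iff hπ, Ideal.map_span, Set.image_singleton, hc, hc] at this
    exact isSMulRegular_quotient_span_of_C this
  refine ⟨isPrime_ker_sup hπ ?_, (mem_ker_sup_iff hπ).not.mpr ?_,
    (mem_ker_sup_iff hπ).not.mpr ?_⟩
  all_goals simp only [map_minorsIdeal, hX, hc]
  · exact isPrime_minorsIdeal (hc₀ j) hreg
  · exact X_zero_notMem_minorsIdeal (hc₀ j)
  · exact X_one_notMem_minorsIdeal (hc₀ k)

end Extension

section Path

variable {K : Type} [Field K] {n : ℕ}

/-- The vector `(y_{m1}, y_{m2}, y_{m3})` of variables at the vertex `m`, with entries indexed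
from `0`. -/
noncomputable def vertex (K : Type) [Field K] (n m : ℕ) (c : Fin 3) :
    MvPolynomial (Fin n × Fin 3) K :=
  yvar K n m (c + 1)

/-- The ideal generated by the `f_{a(a+1)}` with `a ∈ E`. -/
noncomputable def edgesIdeal (K : Type) [Field K] (n : ℕ) (E : Set ℕ) :
    Ideal (MvPolynomial (Fin n × Fin 3) K) :=
  Ideal.span (pathGen K n '' E)

theorem vertex_succ {m : ℕ} (hm : m < n) : vertex K n (m + 1) = fun c ↦ X (⟨m, hm⟩, c) := by
  funext c
  have : m + 1 ≤ n := hm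
  have : (c : ℕ) + 1 ≤ 3 := c.isLt
  simp [vertex, yvar, *]

theorem vertex_mem_supported {m : ℕ} {c : Fin 3} {s : Set (Fin n × Fin 3)}
    (hs : ∀ p : Fin n, (p : ℕ) + 1 = m → (p, c) ∈ s) : vertex K n m c ∈ supported K s := by
  rw [vertex, yvar]
  split_ifs with h
  · exact X_mem_supported.mpr (hs _ (Nat.sub_add_cancel h.1))
  · exact zero_mem _

theorem supportedOn_edgesIdeal_Ico (m m' : ℕ) :
    SupportedOn {x : Fin n × Fin 3 | m ≤ (x.1 : ℕ) + 1 ∧ (x.1 : ℕ) < m'}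
      (edgesIdeal K n (Set.Ico m m')) := by
  refine supportedOn_span ?_
  rintro _ ⟨a, ⟨hm, hm'⟩, rfl⟩
  exact sum_mem fun c _ ↦ mul_mem
    (vertex_mem_supported fun p hp ↦ show m ≤ (p : ℕ) + 1 ∧ (p : ℕ) < m' by omega)
    (vertex_mem_supported fun p hp ↦ show m ≤ (p : ℕ) + 1 ∧ (p : ℕ) < m' by omega)

theorem edgesIdeal_union (E F : Set ℕ) :
    edgesIdeal K n (E ∪ F) = edgesIdeal K n E ⊔ edgesIdeal K n F := by
  simp only [edgesIdeal, Set.image_union, Ideal.span_union]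

theorem exceptIdeal_succ {p : ℕ} (hp : p < n) :
    exceptIdeal K n (p + 1) =
      edgesIdeal K n (Set.Ico 1 p) ⊔ edgesIdeal K n (Set.Ico (p + 2) n) := by
  rw [← edgesIdeal_union, exceptIdeal, edgesIdeal]
  congr 1
  ext g
  simp only [Set.mem_ofPred_eq, Set.mem_image, Set.mem_union, Set.mem_Ico]
  constructor
  · rintro ⟨a, h₁, hn, hi₁, hi₂, rfl⟩
    exact ⟨a, by omega, rfl⟩
  · rintro ⟨a, ha, rfl⟩
    exact ⟨a, by omega, by omega, by omega, by omega, rfl⟩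

variable {I : Ideal (MvPolynomial (Fin n × Fin 3) K)} {j k : Fin 3}

theorem IsGenericMod.sup_span_pathGen {m : ℕ} (hm : m < n)
    (hI : SupportedOn {x | (x.1 : ℕ) < m} I) (h : IsGenericMod I (vertex K n m) j k)
    (hkj : k ≠ j) :
    IsGenericMod (I ⊔ Ideal.span {pathGen K n m}) (vertex K n (m + 1)) j k := by
  obtain ⟨t, htj, htk⟩ := (by decide : ∀ j k : Fin 3, ∃ t, t ≠ j ∧ t ≠ k) j k
  have hsum : pathGen K n m = ∑ c, vertex K n m c * X (⟨m, hm⟩, c) :=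
    Finset.sum_congr rfl fun c _ ↦ congrArg (vertex K n m c * ·) (congrFun (vertex_succ hm) c)
  rw [hsum, vertex_succ hm]
  refine h.sup_span_sum (Prod.mk_right_injective _) (hI.mono ?_) (fun c ↦ ?_) hkj htj htk
  · rintro _ hx ⟨c, rfl⟩
    simp at hx
  · refine vertex_mem_supported fun p hp ⟨d, hd⟩ ↦ ?_
    obtain rfl : _ = p := congrArg Prod.fst hd
    simp at hp

theorem IsGenericMod.sup_edgesIdeal {m m' : ℕ} (hm : m ≤ m') (hn : m' ≤ n)
    (hI : SupportedOn {x | (x.1 : ℕ) < m} I) (h : IsGenericMod I (vertex K n m) j k)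
    (hkj : k ≠ j) :
    IsGenericMod (I ⊔ edgesIdeal K n (Set.Ico m m')) (vertex K n m') j k := by
  induction m', hm using Nat.le_induction with
  | base => simpa [edgesIdeal] using h
  | succ m' hm ih =>
    have hsup : SupportedOn {x | (x.1 : ℕ) < m'} (I ⊔ edgesIdeal K n (Set.Ico m m')) :=
      (hI.mono fun x hx ↦ lt_of_lt_of_le hx hm).sup
        ((supportedOn_edgesIdeal_Ico m m').mono fun x hx ↦ hx.2)
    convert (ih (by omega)).sup_span_pathGen (by omega) hsup hkj using 1
    rw [edgesIdeal, ← Set.insert_Ico_right_eq_Ico_add_one hm, Set.image_insert_eq,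
      Ideal.span_insert, sup_comm (Ideal.span _), ← sup_assoc, edgesIdeal]

theorem isGenericMod_vertex_succ [I.IsPrime] {m : ℕ} (hm : m < n)
    (hI : SupportedOn {x | (x.1 : ℕ) ≠ m} I) (hkj : k ≠ j) :
    IsGenericMod I (vertex K n (m + 1)) j k := by
  rw [vertex_succ hm]
  exact (hI.mono (by rintro _ hx ⟨c, rfl⟩; exact hx rfl)).isGenericMod_X (by simpa using hkj)

theorem isGenericMod_edgesIdeal {m : ℕ} (hm : 1 ≤ m) (hn : m ≤ n) (hkj : k ≠ j) :
    IsGenericMod (edgesIdeal K n (Set.Ico 1 m)) (vertex K n m) j k := by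
  have h₁ : IsGenericMod ⊥ (vertex K n 1) j k :=
    isGenericMod_vertex_succ (by omega) supportedOn_bot hkj
  simpa using h₁.sup_edgesIdeal hm hn supportedOn_bot hkj

theorem isPrime_sup_span_vertex_image [I.IsPrime] {m : ℕ} (hm : m < n) {T : Set (Fin 3)}
    (hI : SupportedOn {x | (x.1 : ℕ) = m → x.2 ∉ T} I) :
    (I ⊔ Ideal.span (vertex K n (m + 1) '' T)).IsPrime := by
  have himage : vertex K n (m + 1) '' T = X '' (Prod.mk ⟨m, hm⟩ '' T) := by
    rw [vertex_succ hm, Set.image_image]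
  rw [himage]
  refine (hI.mono ?_).isPrime_sup_span_X_image
  rintro _ hx ⟨c, hc, rfl⟩
  exact hx rfl hc

theorem IsGenericMod.isPrime_sup_edgesIdeal_sup_span_vertex {p : ℕ} (hp : p + 2 ≤ n)
    {T : Set (Fin 3)}
    (hI : SupportedOn {x | (x.1 : ℕ) < p + 2 ∧ ((x.1 : ℕ) = p → x.2 ∉ T)} I)
    (h : IsGenericMod I (vertex K n (p + 2)) j k) (hkj : k ≠ j) :
    (I ⊔ edgesIdeal K n (Set.Ico (p + 2) n) ⊔ Ideal.span (vertex K n (p + 1) '' T)).IsPrime := by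
  have := (h.sup_edgesIdeal hp le_rfl (hI.mono fun x hx ↦ hx.1) hkj).isPrime
  refine isPrime_sup_span_vertex_image (by omega) (.sup (hI.mono fun x hx ↦ hx.2)
    ((supportedOn_edgesIdeal_Ico _ _).mono ?_))
  rintro x ⟨hx, -⟩ hxp
  omega

theorem isPrime_Pideal {p : ℕ} (hp : 1 ≤ p) (hn : p + 2 ≤ n) : (Pideal K n (p + 1)).IsPrime := by
  have hL : SupportedOn {x | (x.1 : ℕ) < p} (edgesIdeal K n (Set.Ico 1 p)) :=
    (supportedOn_edgesIdeal_Ico 1 p).mono fun x hx ↦ hx.2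
  have hLprime : (edgesIdeal K n (Set.Ico 1 p)).IsPrime :=
    (isGenericMod_edgesIdeal (j := 0) (k := 1) hp (by omega) (by decide)).isPrime
  have hgen : IsGenericMod (edgesIdeal K n (Set.Ico 1 p)) (vertex K n (p + 2)) 0 1 :=
    isGenericMod_vertex_succ hn
      (hL.mono fun x (hx : (x.1 : ℕ) < p) ↦ show (x.1 : ℕ) ≠ p + 1 by omega) (by decide)
  have hspan : Ideal.span {yvar K n (p + 1) 1, yvar K n (p + 1) 2, yvar K n (p + 1) 3} =
      Ideal.span (vertex K n (p + 1) '' Set.univ) := by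
    congr 1
    ext f
    simp [vertex, Fin.exists_fin_succ, eq_comm]
  rw [Pideal, exceptIdeal_succ (by omega), hspan, sup_comm]
  refine hgen.isPrime_sup_edgesIdeal_sup_span_vertex hn (hL.mono fun x (hx : (x.1 : ℕ) < p) ↦ ?_)
    (by decide)
  exact ⟨by omega, fun h ↦ by omega⟩

/-- The ideal generated by those generators of `Q_{p + 1}` that involve neither the vertices beyond
`p + 2` nor the coordinate complementary to `k` at the vertex `p + 1`. -/
noncomputable def determinantalIdeal (K : Type) [Field K] (n p : ℕ) (k : Fin 3) :
    Ideal (MvPolynomial (Fin n × Fin 3) K) :=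
  edgesIdeal K n (Set.Ico 1 p) ⊔
    minorsIdeal (vertex K n p 0) (vertex K n p k) (vertex K n (p + 2) 0) (vertex K n (p + 2) k)
      (vertex K n (p + 1) 0) (vertex K n (p + 1) k)

theorem Qideal_succ {p : ℕ} (hp : p < n) {k k' : Fin 3} (hk : kcol (p + 1) = k + 1)
    (hk' : khat (p + 1) = k' + 1) :
    Qideal K n (p + 1) = determinantalIdeal K n p k ⊔ edgesIdeal K n (Set.Ico (p + 2) n) ⊔
      Ideal.span (vertex K n (p + 1) '' {k'}) := by
  have hspan {R : Type} [CommRing R] (L M : Ideal R) (a b c d : R) :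
      Ideal.span {a, b, c, d} ⊔ (L ⊔ M) = L ⊔ Ideal.span {a, b, c} ⊔ M ⊔ Ideal.span {d} := by
    simp only [Ideal.span_insert]
    ac_rfl
  rw [Qideal, exceptIdeal_succ hp, hspan, determinantalIdeal, minorsIdeal, Set.image_singleton]
  simp only [hk, hk', vertex, Fin.val_zero, zero_add, add_tsub_cancel_right, add_assoc,
    Nat.reduceAdd]

theorem supportedOn_determinantalIdeal {p : ℕ} {k k' : Fin 3} (hk' : k' ≠ 0) (hkk' : k' ≠ k) :
    SupportedOn {x | (x.1 : ℕ) < p + 2 ∧ ((x.1 : ℕ) < p ∨ x.2 ≠ k')}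
      (determinantalIdeal K n p k) := by
  have hmem {m : ℕ} {c : Fin 3} (hm : m ≤ p + 2) (hc : m ≤ p ∨ c ≠ k') :
      vertex K n m c ∈ supported K
        {x : Fin n × Fin 3 | (x.1 : ℕ) < p + 2 ∧ ((x.1 : ℕ) < p ∨ x.2 ≠ k')} :=
    vertex_mem_supported fun q _ ↦
      ⟨show (q : ℕ) < p + 2 by omega, hc.imp_left fun hmp ↦ show (q : ℕ) < p by omega⟩
  refine .sup ((supportedOn_edgesIdeal_Ico _ _).mono ?_) (supportedOn_minorsIdeal ?_ ?_ ?_ ?_ ?_ ?_)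
  · rintro x ⟨-, hx⟩
    exact ⟨by omega, .inl hx⟩
  all_goals exact hmem (by omega) (by simp [hk'.symm, hkk'.symm])

theorem isPrime_determinantalIdeal {p : ℕ} (hp : 1 ≤ p) (hn : p + 2 ≤ n) {k : Fin 3} (hk : k ≠ 0) :
    (determinantalIdeal K n p k).IsPrime ∧ vertex K n (p + 2) 0 ∉ determinantalIdeal K n p k ∧
      vertex K n (p + 2) k ∉ determinantalIdeal K n p k := by
  let u : Fin 4 → Fin n × Fin 3 :=
    ![(⟨p + 1, hn⟩, 0), (⟨p + 1, hn⟩, k), (⟨p, by omega⟩, 0), (⟨p, by omega⟩, k)]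
  have hu : Function.Injective u := by
    intro c d hcd
    fin_cases c <;> fin_cases d <;> simp_all [u]
  have hrange : ∀ x : Fin n × Fin 3, (x.1 : ℕ) < p → x ∈ (Set.range u)ᶜ := by
    rintro _ hx ⟨d, rfl⟩
    fin_cases d <;> simp [u] at hx
  have hgen : IsGenericMod (edgesIdeal K n (Set.Ico 1 p)) (vertex K n p) 0 k :=
    isGenericMod_edgesIdeal hp (by omega) hk
  have hprime := hgen.isPrime_sup_minorsIdeal hu
    ((supportedOn_edgesIdeal_Ico 1 p).mono fun x hx ↦ hrange x hx.2)
    (fun c ↦ vertex_mem_supported fun q hq ↦ hrange (q, c) (Nat.lt_of_succ_le hq.le))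
  simpa [determinantalIdeal, vertex_succ (show p < n by omega), vertex_succ hn, u] using hprime

theorem isGenericMod_determinantalIdeal {p : ℕ} (hp : 1 ≤ p) (hn : p + 2 ≤ n) {k k' : Fin 3}
    (hk : k ≠ 0) (hk' : k' ≠ 0) (hkk' : k' ≠ k) :
    IsGenericMod (determinantalIdeal K n p k) (vertex K n (p + 2)) k' 0 := by
  obtain ⟨hJ, h₀, h₁⟩ := isPrime_determinantalIdeal (K := K) hp hn hk
  have hfresh : SupportedOn {(⟨p + 1, hn⟩, k')}ᶜ (determinantalIdeal K n p k) :=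
    (supportedOn_determinantalIdeal hk' hkk').mono fun x hx hxk ↦ by
      obtain rfl : x = _ := hxk
      simp at hx
  have hvertex (c : Fin 3) : vertex K n (p + 2) c = X (⟨p + 1, hn⟩, c) :=
    congrFun (vertex_succ hn) c
  refine ⟨hJ, fun c ↦ ?_, ?_⟩
  · obtain rfl | rfl | rfl : c = 0 ∨ c = k ∨ c = k' := by omega
    · exact h₀
    · exact h₁
    · rw [hvertex]
      exact hfresh.X_notMem (Set.mem_singleton _)
  · rw [hvertex k']
    refine hfresh.isSMulRegular_sup_span_X (vertex_mem_supported fun _ _ h ↦ ?_) h₀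
    exact hk' (congrArg Prod.snd h).symm

theorem exists_columns (i : ℕ) :
    ∃ k k' : Fin 3, k ≠ 0 ∧ k' ≠ 0 ∧ k' ≠ k ∧ kcol i = k + 1 ∧ khat i = k' + 1 := by
  by_cases h : Even i
  · exact ⟨1, 2, by simp [kcol, khat, h]⟩
  · exact ⟨2, 1, by simp [kcol, khat, h]⟩

theorem isPrime_Qideal {p : ℕ} (hp : 1 ≤ p) (hn : p + 2 ≤ n) : (Qideal K n (p + 1)).IsPrime := by
  obtain ⟨k, k', hk, hk', hkk', hkcol, hkhat⟩ := exists_columns (p + 1)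
  rw [Qideal_succ (by omega) hkcol hkhat]
  have hgen := isGenericMod_determinantalIdeal (K := K) hp hn hk hk' hkk'
  refine hgen.isPrime_sup_edgesIdeal_sup_span_vertex hn
    ((supportedOn_determinantalIdeal hk' hkk').mono fun x hx ↦ ?_) hk'.symm
  refine ⟨hx.1, fun hxp ↦ ?_⟩
  simpa [hxp] using hx.2

end Path

/-- For the `n`-path graph with `n ≥ 3` and `d = 3`, the ideals `P_i` and `Q_i`
(`i = 2, …, n-1`) are prime ideals of `S`. -/
theorem path_P_Q_isPrime (K : Type) [Field K] (n : ℕ) (hn : 3 ≤ n) :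
    ∀ i : ℕ, 2 ≤ i → i + 1 ≤ n → (Pideal K n i).IsPrime ∧ (Qideal K n i).IsPrime := by
  intro i hi hin
  obtain ⟨p, rfl⟩ : ∃ p, i = p + 1 := ⟨i - 1, by omega⟩
  exact ⟨isPrime_Pideal (by omega) hin, isPrime_Qideal (by omega) hin⟩
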